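/- arXiv:0812.4266 — 2 statements merged into one kernel-verified Lean document; each statement's English description precedes it below -/
import Mathlib

section
/- Let n ≥ 2 and D := {x ∈ B^n : x_{n−1} + x_n ≥ 1}. For Lebesgue-almost every x ∈ B^n there exists N = N(x) ∈ ℕ such that T^N x ∈ D. Together with T '' D = D, this says D is an absorbing set for the SSA. -/
/-- Entry access with junk value `0` outside the index range: `ent x m = x_{m+1}`
(0-based coordinate `m`) for `m < n`, and `0` otherwise. -/
noncomputable def ent {n : ℕ} (x : Fin n → ℝ) (m : ℕ) : ℝ :=
  if h : m < n then x ⟨m, h⟩ else 0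

/-- `B^n = {x ∈ ℝ^n : 1 ≥ x₁ ≥ x₂ ≥ ⋯ ≥ x_n ≥ 0}` (note that the stated antitonicity of
the `0`-extended sequence `ent x` encodes both the ordering and `x_n ≥ 0`). -/
def Bset (n : ℕ) : Set (Fin n → ℝ) :=
  {x | ent x 0 ≤ 1 ∧ ∀ i j : ℕ, i ≤ j → ent x j ≤ ent x i}

/-- The index `j(x) = #{l ∈ {1,…,n} : x_l > 1 − x_n}` of the SSA. -/
noncomputable def ssaJ {n : ℕ} (x : Fin n → ℝ) : ℕ :=
  (Finset.univ.filter fun l : Fin n => 1 - ent x (n - 1) < x l).card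

/-- The subtractive Selmer algorithm (SSA) map `T` on `B^n`:
if `j(x) = 0` then `Tx = (x₁/(1−x_n), …, x_n/(1−x_n))`, and if `1 ≤ j(x) ≤ n` then
`Tx = (x₂/x₁, …, x_j/x₁, (1−x_n)/x₁, x_{j+1}/x₁, …, x_n/x₁)` with `(1−x_n)/x₁` in
position `j` (1-based positions; coordinate `i : Fin n` is position `i+1`). -/
noncomputable def ssaT {n : ℕ} (x : Fin n → ℝ) : Fin n → ℝ :=
  if ssaJ x = 0 then fun i => x i / (1 - ent x (n - 1))
  else fun i =>
    if (i : ℕ) + 1 < ssaJ x then ent x ((i : ℕ) + 1) / ent x 0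
    else if (i : ℕ) + 1 = ssaJ x then (1 - ent x (n - 1)) / ent x 0
    else x i / ent x 0

/-!
In the homogeneous coordinates `(1, x₁, …, x_n)`, the map `T` subtracts the smallest coordinate from
the largest one, sorts the result in decreasing order and rescales it so that the largest coordinate
is again `1`. The ratio of the sum of the coordinates to the smallest one is
`V x = (1 + ∑ xᵢ) / x_n`. As long as `x_n ≤ 1 - x_n`, the smallest coordinate survives while the sum
decreases by exactly that coordinate, so `V (T x) = V x - 1`. Since `V ≥ 0`, every orbit starting at
a point with `x_n > 0` must reach `x_n > 1/2`, where `x_{n-1} + x_n ≥ 2 x_n > 1`.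
-/

theorem antitone_insertNth {α : Type*} [Preorder α] {n : ℕ} {p : Fin (n + 1)} {c : α}
    {f : Fin n → α} (hf : Antitone f) (hbefore : ∀ i, i.castSucc < p → c ≤ f i)
    (hafter : ∀ i, p ≤ i.castSucc → f i ≤ c) : Antitone (p.insertNth c f : Fin (n + 1) → α) := by
  refine antitone_iff_forall_lt.2 fun a b hab ↦ ?_
  cases a using p.succAboveCases with
  | x =>
    cases b using p.succAboveCases with
    | x => exact (lt_irrefl _ hab).elim
    | p j => simpa using hafter j ((p.lt_succAbove_iff_le_castSucc j).1 hab)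
  | p i =>
    cases b using p.succAboveCases with
    | x => simpa using hbefore i ((p.succAbove_lt_iff_castSucc_lt i).1 hab)
    | p j => simpa using hf (Fin.succAbove_lt_succAbove_iff.1 hab).le

theorem exists_iterate_mem_inter_of_le_sub_one {α R : Type*} [Ring R] [LinearOrder R]
    [IsStrictOrderedRing R] [Archimedean R] {f : α → α} {S A : Set α} {V : α → R}
    (hV : ∀ x ∈ S, 0 ≤ V x) (hmaps : Set.MapsTo f (S \ A) S)
    (hdecr : ∀ x ∈ S \ A, V (f x) ≤ V x - 1) {x : α} (hx : x ∈ S) : ∃ N : ℕ, f^[N] x ∈ S ∩ A := by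
  obtain ⟨k, hk⟩ := exists_nat_gt (V x)
  induction k generalizing x with
  | zero => exact absurd (hV x hx) (by simpa using hk)
  | succ k ih =>
    by_cases hA : x ∈ A
    · exact ⟨0, hx, hA⟩
    · have hlt : V (f x) < k :=
        (hdecr x ⟨hx, hA⟩).trans_lt (sub_lt_iff_lt_add.2 (by exact_mod_cast hk))
      obtain ⟨N, hN⟩ := ih (hmaps ⟨hx, hA⟩) hlt
      exact ⟨N + 1, hN⟩

theorem ent_coe {n : ℕ} (x : Fin n → ℝ) (i : Fin n) : ent x i = x i :=
  dif_pos i.isLt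

theorem ent_of_le {n m : ℕ} (x : Fin n → ℝ) (h : n ≤ m) : ent x m = 0 :=
  dif_neg h.not_gt

theorem mem_Bset_iff {n : ℕ} {x : Fin n → ℝ} :
    x ∈ Bset n ↔ Antitone x ∧ ∀ i, x i ∈ Set.Icc 0 1 := by
  constructor
  · rintro ⟨hle, hanti⟩
    refine ⟨fun i j hij ↦ ?_, fun i ↦ ⟨?_, ?_⟩⟩
    · simpa only [ent_coe] using hanti i j hij
    · simpa only [ent_coe, ent_of_le x le_rfl] using hanti i n i.isLt.le
    · simpa only [ent_coe] using (hanti 0 i (Nat.zero_le _)).trans hle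
  · rintro ⟨hanti, hmem⟩
    have hent (m : ℕ) : ent x m ∈ Set.Icc 0 1 := by
      unfold ent
      split_ifs
      exacts [hmem _, ⟨le_rfl, zero_le_one⟩]
    refine ⟨(hent 0).2, fun i j hij ↦ ?_⟩
    rcases lt_or_ge j n with hj | hj
    · simpa only [← ent_coe] using hanti (a := ⟨i, hij.trans_lt hj⟩) (b := ⟨j, hj⟩) hij
    · exact (ent_of_le x hj).trans_le (hent i).1

theorem ssaJ_lt_add_one {n : ℕ} (x : Fin n → ℝ) : ssaJ x < n + 1 :=
  Nat.lt_succ_of_le (card_finset_fin_le _)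

variable {n : ℕ} {x : Fin (n + 1) → ℝ}

theorem ent_last (x : Fin (n + 1) → ℝ) : ent x n = x (Fin.last n) :=
  ent_coe x (Fin.last n)

theorem lt_ssaJ_iff (hx : Antitone x) (i : Fin (n + 1)) :
    i < ssaJ x ↔ 1 - x (Fin.last n) < x i := by
  rw [← ent_last x]
  exact Tuple.lt_card_gt_iff_apply_gt_of_antitone hx

/-- The tuple `(x₁, …, x_j, 1 - x_n, x_{j+1}, …, x_n)` with `j = j(x)`: the homogeneous coordinates
of `T x`. Dividing by the first entry turns it into `(1, T x)`. -/
noncomputable def ssaInsert (x : Fin (n + 1) → ℝ) : Fin (n + 2) → ℝ :=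
  Fin.insertNth ⟨ssaJ x, ssaJ_lt_add_one x⟩ (1 - x (Fin.last n)) x

theorem ssaInsert_of_lt {i : Fin (n + 1)} (h : i < ssaJ x) : ssaInsert x i.castSucc = x i := by
  let p : Fin (n + 2) := ⟨ssaJ x, ssaJ_lt_add_one x⟩
  rw [← p.succAbove_of_castSucc_lt i h]
  exact Fin.insertNth_apply_succAbove _ _ _ _

theorem ssaInsert_of_eq {i : Fin (n + 2)} (h : i = ssaJ x) :
    ssaInsert x i = 1 - x (Fin.last n) := by
  obtain rfl : i = ⟨ssaJ x, ssaJ_lt_add_one x⟩ := Fin.ext h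
  exact Fin.insertNth_apply_same _ _ _

theorem ssaInsert_of_ge {i : Fin (n + 1)} (h : ssaJ x ≤ i) : ssaInsert x i.succ = x i := by
  let p : Fin (n + 2) := ⟨ssaJ x, ssaJ_lt_add_one x⟩
  rw [← p.succAbove_of_le_castSucc i h]
  exact Fin.insertNth_apply_succAbove _ _ _ _

theorem ssaT_apply (x : Fin (n + 1) → ℝ) (i : Fin (n + 1)) :
    ssaT x i = ssaInsert x i.succ / ssaInsert x 0 := by
  unfold ssaT
  rw [Nat.add_sub_cancel, ent_last]
  split_ifs with hJ
  · rw [ssaInsert_of_ge (by omega), ssaInsert_of_eq (i := 0) hJ.symm]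
  · have hzero : ssaInsert x 0 = ent x 0 :=
      (ssaInsert_of_lt (i := 0) (Nat.pos_of_ne_zero hJ)).trans (ent_coe x 0).symm
    rw [hzero]
    dsimp only
    split_ifs with hlt heq
    · have hi : (i : ℕ) + 1 < n + 1 := by have := ssaJ_lt_add_one x; omega
      have hent : ent x (i + 1) = x ⟨i + 1, hi⟩ := ent_coe x ⟨i + 1, hi⟩
      rw [hent, ← ssaInsert_of_lt (i := ⟨i + 1, hi⟩) hlt, Fin.castSucc_mk, Fin.succ]
    · rw [ssaInsert_of_eq (i := i.succ) heq]
    · rw [ssaInsert_of_ge (by omega)]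

theorem sum_ssaInsert (x : Fin (n + 1) → ℝ) :
    ∑ i, ssaInsert x i = 1 - x (Fin.last n) + ∑ i, x i :=
  Fin.sum_insertNth _ _ _

theorem antitone_ssaInsert (hx : Antitone x) : Antitone (ssaInsert x) :=
  antitone_insertNth hx (fun i hi ↦ ((lt_ssaJ_iff hx i).1 hi).le)
    fun i hi ↦ not_lt.1 fun h ↦ hi.not_gt ((lt_ssaJ_iff hx i).2 h)

theorem ssaInsert_last (hx : Antitone x) (hhalf : x (Fin.last n) ≤ 1 / 2) :
    ssaInsert x (Fin.last (n + 1)) = x (Fin.last n) := by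
  have hJ : ¬ (Fin.last n : ℕ) < ssaJ x := by
    rw [lt_ssaJ_iff hx]
    linarith
  exact ssaInsert_of_ge (not_lt.1 hJ)

theorem ssaInsert_pos (hx : Antitone x) (hpos : 0 < x (Fin.last n))
    (hhalf : x (Fin.last n) ≤ 1 / 2) (i : Fin (n + 2)) : 0 < ssaInsert x i :=
  calc 0 < x (Fin.last n) := hpos
    _ = ssaInsert x (Fin.last (n + 1)) := (ssaInsert_last hx hhalf).symm
    _ ≤ ssaInsert x i := antitone_ssaInsert hx (Fin.le_last i)

theorem ssaT_last (hx : Antitone x) (hhalf : x (Fin.last n) ≤ 1 / 2) :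
    ssaT x (Fin.last n) = x (Fin.last n) / ssaInsert x 0 := by
  rw [ssaT_apply, Fin.succ_last, ssaInsert_last hx hhalf]

theorem ssaT_mem_Bset (hx : Antitone x) (hpos : 0 < x (Fin.last n))
    (hhalf : x (Fin.last n) ≤ 1 / 2) : ssaT x ∈ Bset (n + 1) := by
  have hins := ssaInsert_pos hx hpos hhalf
  have hanti := antitone_ssaInsert hx
  refine mem_Bset_iff.2 ⟨fun i j hij ↦ ?_, fun i ↦ ?_⟩
  · rw [ssaT_apply, ssaT_apply]
    exact div_le_div_of_nonneg_right (hanti (Fin.succ_le_succ_iff.2 hij)) (hins 0).le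
  · rw [ssaT_apply]
    exact ⟨(div_pos (hins _) (hins 0)).le, (div_le_one (hins 0)).2 (hanti (Fin.zero_le _))⟩

/-- The sum of the homogeneous coordinates `(1, x₁, …, x_n)` divided by the smallest of them:
a potential that drops by `1` at each step of `T` from a point with `0 < x_n ≤ 1/2`. -/
noncomputable def ssaPotential (x : Fin (n + 1) → ℝ) : ℝ :=
  (1 + ∑ i, x i) / x (Fin.last n)

theorem ssaPotential_nonneg (hx : ∀ i, 0 ≤ x i) : 0 ≤ ssaPotential x :=
  div_nonneg (add_nonneg zero_le_one (Finset.sum_nonneg fun i _ ↦ hx i)) (hx _)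

theorem ssaPotential_ssaT (hx : Antitone x) (hpos : 0 < x (Fin.last n))
    (hhalf : x (Fin.last n) ≤ 1 / 2) : ssaPotential (ssaT x) = ssaPotential x - 1 := by
  have hne : ssaInsert x 0 ≠ 0 := (ssaInsert_pos hx hpos hhalf 0).ne'
  have hsum : 1 + ∑ i, ssaT x i = (∑ i, ssaInsert x i) / ssaInsert x 0 := by
    simp only [ssaT_apply, ← Finset.sum_div, Fin.sum_univ_succ (ssaInsert x), add_div, div_self hne]
  calc ssaPotential (ssaT x)
    _ = (∑ i, ssaInsert x i) / ssaInsert x 0 / (x (Fin.last n) / ssaInsert x 0) := by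
      rw [ssaPotential, hsum, ssaT_last hx hhalf]
    _ = (1 - x (Fin.last n) + ∑ i, x i) / x (Fin.last n) := by
      rw [div_div_div_cancel_right₀ hne, sum_ssaInsert]
    _ = ssaPotential x - 1 := by
      rw [ssaPotential, sub_add_eq_add_sub, sub_div, div_self hpos.ne']

theorem exists_iterate_ssaT_half_lt_last (hx : x ∈ Bset (n + 1)) (hpos : 0 < x (Fin.last n)) :
    ∃ N : ℕ, ssaT^[N] x ∈ Bset (n + 1) ∧ 1 / 2 < ssaT^[N] x (Fin.last n) := by
  let S : Set (Fin (n + 1) → ℝ) := {y | y ∈ Bset (n + 1) ∧ 0 < y (Fin.last n)}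
  let A : Set (Fin (n + 1) → ℝ) := {y | 1 / 2 < y (Fin.last n)}
  have hnonneg (y) (hy : y ∈ S) : 0 ≤ ssaPotential y :=
    ssaPotential_nonneg fun i ↦ ((mem_Bset_iff.1 hy.1).2 i).1
  have hmaps : Set.MapsTo ssaT (S \ A) S := by
    rintro y ⟨⟨hy, hy_pos⟩, hy_half⟩
    have hanti := (mem_Bset_iff.1 hy).1
    refine ⟨ssaT_mem_Bset hanti hy_pos (not_lt.1 hy_half), ?_⟩
    rw [ssaT_last hanti (not_lt.1 hy_half)]
    exact div_pos hy_pos (ssaInsert_pos hanti hy_pos (not_lt.1 hy_half) 0)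
  have hdecr (y) (hy : y ∈ S \ A) : ssaPotential (ssaT y) ≤ ssaPotential y - 1 :=
    (ssaPotential_ssaT (mem_Bset_iff.1 hy.1.1).1 hy.1.2 (not_lt.1 hy.2)).le
  have hxS : x ∈ S := ⟨hx, hpos⟩
  obtain ⟨N, hS, hA⟩ := exists_iterate_mem_inter_of_le_sub_one hnonneg hmaps hdecr hxS
  exact ⟨N, hS.1, hA⟩

open MeasureTheory in
/-- **`D` is reached almost surely.** For `n ≥ 2` and
`D = {x ∈ B^n : x_{n−1} + x_n ≥ 1}`, Lebesgue-almost every `x ∈ B^n` admits an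
`N = N(x) ∈ ℕ` with `T^N x ∈ D`; together with `T '' D = D` this says `D` is an
absorbing set for the SSA. -/
theorem ssa_absorbing_ae (n : ℕ) (hn : 2 ≤ n) :
    ∀ᵐ x ∂(volume : Measure (Fin n → ℝ)), x ∈ Bset n →
      ∃ N : ℕ, ssaT^[N] x ∈
        {y : Fin n → ℝ | y ∈ Bset n ∧ 1 ≤ ent y (n - 2) + ent y (n - 1)} := by
  obtain ⟨k, rfl⟩ := Nat.exists_eq_add_of_le' hn
  have hne : ∀ᵐ x ∂(volume : Measure (Fin (k + 2) → ℝ)), x (Fin.last (k + 1)) ≠ 0 :=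
    Measure.ae_eval_ne _ (Fin.last (k + 1)) 0
  filter_upwards [hne] with x hlast hx
  have hpos : 0 < x (Fin.last (k + 1)) := ((mem_Bset_iff.1 hx).2 _).1.lt_of_ne' hlast
  obtain ⟨N, hB, hhalf⟩ := exists_iterate_ssaT_half_lt_last hx hpos
  refine ⟨N, hB, ?_⟩
  have hle : ent (ssaT^[N] x) (k + 1) ≤ ent (ssaT^[N] x) k := hB.2 k (k + 1) k.le_succ
  rw [← ent_last (ssaT^[N] x)] at hhalf
  simp only [Nat.add_sub_cancel, Nat.add_succ_sub_one]
  linarith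
end

section
/- Let x ∈ B^n have MSA orbit defined for all times, and suppose the MSA expansion of x is eventually periodic: there exist m ≥ 0 and p ≥ 1 with S^{m+p} x = S^m x. Then for every column index g ∈ {0,…,n} and every i ∈ {1,…,n}, the ratio (β^{(s)})_{i,g} / (β^{(s)})_{0,g} converges to x_i as s → ∞; i.e. the periodic multiplicative Selmer algorithm is uniformly weakly convergent. -/
open Matrix Filter

/-- The MSA digit `k = ⌊1/x_n⌋`. -/
noncomputable def msaDigit {n : ℕ} (x : Fin n → ℝ) : ℤ :=
  ⌊(ent x (n - 1))⁻¹⌋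

/-- The multiplicative Selmer algorithm (MSA) map
`S(x₁,…,x_n) = (x₂/x₁, …, x_n/x₁, (1 − k·x_n)/x₁)` with `k = ⌊1/x_n⌋`. -/
noncomputable def msaS {n : ℕ} (x : Fin n → ℝ) : Fin n → ℝ := fun i =>
  if (i : ℕ) + 1 < n then ent x ((i : ℕ) + 1) / ent x 0
  else (1 - (msaDigit x : ℝ) * ent x (n - 1)) / ent x 0

/-- The Selmer matrix `β(k)`: the `(n+1)×(n+1)` real matrix (rows and columns indexed by
`0,…,n`) whose only nonzero entries are `β(k)_{0,n−1} = k`, `β(k)_{0,n} = 1`, and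
`β(k)_{i,i−1} = 1` for `1 ≤ i ≤ n`. -/
noncomputable def selmerBeta (n : ℕ) (k : ℤ) : Matrix (Fin (n + 1)) (Fin (n + 1)) ℝ :=
  Matrix.of fun i j =>
    if (i : ℕ) = 0 ∧ (j : ℕ) = n - 1 then (k : ℝ)
    else if (i : ℕ) = 0 ∧ (j : ℕ) = n then 1
    else if (j : ℕ) + 1 = (i : ℕ) then 1 else 0

/-- `β^{(s)} = β(k₁)β(k₂)⋯β(k_s)` for the MSA digits `k_s = ⌊1/(S^{s−1}x)_n⌋` of `x`
(with `β^{(0)}` the identity matrix). -/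
noncomputable def msaBeta (n : ℕ) (x : Fin n → ℝ) (s : ℕ) :
    Matrix (Fin (n + 1)) (Fin (n + 1)) ℝ :=
  ((List.range s).map fun t => selmerBeta n (msaDigit (msaS^[t] x))).prod

/-! In homogeneous coordinates `v_s = (1, Sˢ x)` one MSA step reads `β(k_{s+1}) v_{s+1} ∈ ℝ v_s`.
Hence the row `u_s = β^{(s)}_i - x_i β^{(s)}_0` stays orthogonal to `v_s`. Periodicity bounds the
digits, so the Selmer matrices lie entrywise between `β(1)`, which is irreducible with cycles of
coprime lengths `n` and `n + 1`, and some `β(D)`. Consequently all products of `N` consecutive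
Selmer matrices have entries between two positive constants, while the entries of `v_s` stay in
`[1 / (D + 1), 1]`: up to a constant factor, every column `w` of such a product satisfies
`d w ≤ v_s ≤ w` with a uniform `d > 0`. As `u_s` does not see `v_s`, each block of length `N`
shrinks the best constant `K` in `|u_s| ≤ K β^{(s)}_0` by the factor `1 - d`. -/

theorem finite_range_iterate_of_iterate_add_eq {α : Type*} {f : α → α} {x : α} {m p : ℕ}
    (hp : 0 < p) (h : f^[m + p] x = f^[m] x) : (Set.range fun s => f^[s] x).Finite := by
  have hper : Function.IsPeriodicPt f p (f^[m] x) := by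
    rwa [Function.IsPeriodicPt, Function.IsFixedPt, ← Function.iterate_add_apply, add_comm]
  refine ((Set.finite_Iio (m + p)).image fun s => f^[s] x).subset ?_
  rintro _ ⟨s, rfl⟩
  obtain hs | hs := lt_or_ge s m
  · exact ⟨s, hs.trans_le (Nat.le_add_right m p), rfl⟩
  · obtain ⟨t, rfl⟩ := Nat.exists_eq_add_of_le' hs
    refine ⟨t % p + m, ?_, ?_⟩
    · rw [Set.mem_Iio, add_comm m p]
      exact Nat.add_lt_add_right (Nat.mod_lt t hp) m
    · simp only [Function.iterate_add_apply, hper.iterate_mod_apply]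

section PowPos

variable {ι R : Type*} [Fintype ι] [DecidableEq ι] [Ring R] [LinearOrder R]
  [IsStrictOrderedRing R] {A : Matrix ι ι R}

theorem pow_add_apply_pos (hA : ∀ i j, 0 ≤ A i j) {a b : ℕ} {i j k : ι}
    (hij : 0 < (A ^ a) i j) (hjk : 0 < (A ^ b) j k) : 0 < (A ^ (a + b)) i k := by
  rw [pow_add, mul_apply]
  exact Finset.sum_pos' (fun l _ => mul_nonneg (pow_apply_nonneg hA a i l)
    (pow_apply_nonneg hA b l k)) ⟨j, Finset.mem_univ j, mul_pos hij hjk⟩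

theorem pow_mul_apply_self_pos (hA : ∀ i j, 0 ≤ A i j) {a : ℕ} {i : ι}
    (ha : 0 < (A ^ a) i i) (r : ℕ) : 0 < (A ^ (r * a)) i i := by
  induction r with
  | zero => simp
  | succ r ih => simpa [add_mul] using pow_add_apply_pos hA ih ha

theorem eventually_pow_apply_self_pos (hA : ∀ i j, 0 ≤ A i j) {a b : ℕ} (hab : a.Coprime b)
    {i : ι} (ha : 0 < (A ^ a) i i) (hb : 0 < (A ^ b) i i) :
    ∀ᶠ L in atTop, 0 < (A ^ L) i i := by
  filter_upwards [eventually_ge_atTop (a.pred * b.pred)] with L hL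
  obtain ⟨r, s, rfl⟩ := Nat.exists_add_mul_eq_of_gcd_dvd_of_mul_pred_le a b L
    (by simp [hab.gcd_eq_one]) hL
  exact pow_add_apply_pos hA (pow_mul_apply_self_pos hA ha r) (pow_mul_apply_self_pos hA hb s)

theorem eventually_forall_pow_apply_pos (hA : A.IsIrreducible) {a b : ℕ} (hab : a.Coprime b)
    {i₀ : ι} (ha : 0 < (A ^ a) i₀ i₀) (hb : 0 < (A ^ b) i₀ i₀) :
    ∀ᶠ L in atTop, ∀ i j, 0 < (A ^ L) i j := by
  refine eventually_all.2 fun i => eventually_all.2 fun j => ?_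
  obtain ⟨k, -, hk⟩ := (isIrreducible_iff_exists_pow_pos hA.nonneg).1 hA i i₀
  obtain ⟨l, -, hl⟩ := (isIrreducible_iff_exists_pow_pos hA.nonneg).1 hA i₀ j
  have hloop := eventually_pow_apply_self_pos hA.nonneg hab ha hb
  filter_upwards [(tendsto_sub_atTop_nat (k + l)).eventually hloop,
    eventually_ge_atTop (k + l)] with L hpos hL
  have := pow_add_apply_pos hA.nonneg (pow_add_apply_pos hA.nonneg hk hpos) hl
  rwa [show k + (L - (k + l)) + l = L by omega] at this

end PowPos

/-- The ordered product `B s * B (s + 1) * ⋯ * B (s + t - 1)` of a block of `t` consecutive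
members of a sequence. -/
def blockProd {M : Type*} [Monoid M] (B : ℕ → M) (s t : ℕ) : M :=
  ((List.range t).map fun r => B (s + r)).prod

section Monoid

variable {M : Type*} [Monoid M]

@[simp]
theorem blockProd_zero (B : ℕ → M) (s : ℕ) : blockProd B s 0 = 1 := rfl

theorem blockProd_succ (B : ℕ → M) (s t : ℕ) :
    blockProd B s (t + 1) = blockProd B s t * B (s + t) :=
  List.prod_range_succ _ t

theorem blockProd_const (a : M) (s t : ℕ) : blockProd (fun _ => a) s t = a ^ t := by
  simp [blockProd]

end Monoid

section Monotone

variable {ι R : Type*} [Fintype ι] [DecidableEq ι] [Semiring R] [PartialOrder R]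
  [IsOrderedRing R] {A B : ℕ → Matrix ι ι R}

theorem blockProd_apply_nonneg (hA : ∀ s i j, 0 ≤ A s i j) (s t : ℕ) (i j : ι) :
    0 ≤ blockProd A s t i j := by
  induction t generalizing j with
  | zero => exact zero_le_one_elem i j
  | succ t ih =>
    rw [blockProd_succ, mul_apply]
    exact Finset.sum_nonneg fun l _ => mul_nonneg (ih l) (hA _ l j)

theorem blockProd_apply_mono (hA : ∀ s i j, 0 ≤ A s i j) (hAB : ∀ s i j, A s i j ≤ B s i j)
    (s t : ℕ) (i j : ι) : blockProd A s t i j ≤ blockProd B s t i j := by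
  induction t generalizing j with
  | zero => rfl
  | succ t ih =>
    simp only [blockProd_succ, mul_apply]
    exact Finset.sum_le_sum fun l _ => mul_le_mul (ih l) (hAB _ l j) (hA _ l j)
      ((blockProd_apply_nonneg hA s t i l).trans (ih l))

end Monotone

section Contraction

variable {ι : Type*} [Fintype ι] {u q v w : ι → ℝ} {K d : ℝ}

theorem abs_dotProduct_le_mul_dotProduct (hu : ∀ j, |u j| ≤ K * q j) (hw : ∀ j, 0 ≤ w j) :
    |u ⬝ᵥ w| ≤ K * (q ⬝ᵥ w) := by
  calc |u ⬝ᵥ w| ≤ ∑ j, |u j * w j| := Finset.abs_sum_le_sum_abs _ _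
    _ = ∑ j, |u j| * w j := by simp only [abs_mul, abs_of_nonneg (hw _)]
    _ ≤ ∑ j, K * q j * w j :=
      Finset.sum_le_sum fun j _ => mul_le_mul_of_nonneg_right (hu j) (hw j)
    _ = K * (q ⬝ᵥ w) := by simp only [dotProduct, Finset.mul_sum, mul_assoc]

-- Since `u ⬝ᵥ v = 0`, pairing `u` with `w` only sees the excess `w - v ≤ (1 - d) w`.
theorem abs_dotProduct_le_of_dotProduct_eq_zero (huv : u ⬝ᵥ v = 0)
    (hu : ∀ j, |u j| ≤ K * q j) (hvw : ∀ j, v j ≤ w j) (hwv : ∀ j, d * w j ≤ v j) :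
    |u ⬝ᵥ w| ≤ K * (1 - d) * (q ⬝ᵥ w) := by
  have hKq (j : ι) : 0 ≤ K * q j := (abs_nonneg _).trans (hu j)
  calc |u ⬝ᵥ w| = |u ⬝ᵥ (w - v)| := by rw [dotProduct_sub, huv, sub_zero]
    _ ≤ K * (q ⬝ᵥ (w - v)) :=
      abs_dotProduct_le_mul_dotProduct hu fun j => sub_nonneg.2 (hvw j)
    _ = ∑ j, K * q j * (w j - v j) := by
      simp only [dotProduct, Finset.mul_sum, mul_assoc, Pi.sub_apply]
    _ ≤ ∑ j, K * q j * ((1 - d) * w j) :=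
      Finset.sum_le_sum fun j _ =>
        mul_le_mul_of_nonneg_left (by linarith [hwv j]) (hKq j)
    _ = K * (1 - d) * (q ⬝ᵥ w) := by
      simp only [dotProduct, Finset.mul_sum]
      exact Finset.sum_congr rfl fun j _ => by ring

end Contraction

section RowSequence

variable {ι : Type*} [Fintype ι] {B : ℕ → Matrix ι ι ℝ} {u q v : ℕ → ι → ℝ}

theorem dotProduct_eq_zero_of_zero (hu : ∀ s, u (s + 1) = u s ᵥ* B s)
    (hv : ∀ s, ∃ μ : ℝ, B s *ᵥ v (s + 1) = μ • v s) (h₀ : u 0 ⬝ᵥ v 0 = 0) (s : ℕ) :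
    u s ⬝ᵥ v s = 0 := by
  induction s with
  | zero => exact h₀
  | succ s ih =>
    obtain ⟨μ, hμ⟩ := hv s
    rw [hu, ← dotProduct_mulVec, hμ, dotProduct_smul, ih, smul_zero]

theorem abs_add_le_of_abs_le {K : ℝ} {s : ℕ} (hB : ∀ s i j, 0 ≤ B s i j)
    (hu : ∀ s, u (s + 1) = u s ᵥ* B s) (hq : ∀ s, q (s + 1) = q s ᵥ* B s)
    (hK : ∀ j, |u s j| ≤ K * q s j) (t : ℕ) : ∀ j, |u (s + t) j| ≤ K * q (s + t) j := by
  induction t with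
  | zero => exact hK
  | succ t ih =>
    intro j
    rw [← add_assoc, hu, hq]
    exact abs_dotProduct_le_mul_dotProduct ih fun i => hB (s + t) i j

variable [DecidableEq ι]

theorem vecMul_blockProd (hu : ∀ s, u (s + 1) = u s ᵥ* B s) (s t : ℕ) :
    u s ᵥ* blockProd B s t = u (s + t) := by
  induction t with
  | zero => simp
  | succ t ih => rw [blockProd_succ, ← vecMul_vecMul, ih, ← add_assoc, hu]

theorem abs_le_mul_pow_of_blockProd_comparable {a d K : ℝ} {N s₀ : ℕ}
    (hu : ∀ s, u (s + 1) = u s ᵥ* B s) (hq : ∀ s, q (s + 1) = q s ᵥ* B s)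
    (huv : ∀ s, u s ⬝ᵥ v s = 0) (hvB : ∀ s i j, a * v s i ≤ blockProd B s N i j)
    (hBv : ∀ s i j, d * blockProd B s N i j ≤ a * v s i)
    (hK : ∀ j, |u s₀ j| ≤ K * q s₀ j) (r : ℕ) :
    ∀ j, |u (s₀ + r * N) j| ≤ K * (1 - d) ^ r * q (s₀ + r * N) j := by
  induction r with
  | zero => simpa using hK
  | succ r ih =>
    intro j
    have horth : u (s₀ + r * N) ⬝ᵥ a • v (s₀ + r * N) = 0 := by
      rw [dotProduct_smul, huv, smul_zero]
    rw [add_one_mul, ← add_assoc, ← vecMul_blockProd hu, ← vecMul_blockProd hq, pow_succ,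
      ← mul_assoc]
    exact abs_dotProduct_le_of_dotProduct_eq_zero horth ih (hvB _ · j) (hBv _ · j)

theorem tendsto_div_zero_of_blockProd_comparable {a d : ℝ} {N : ℕ}
    (hB : ∀ s i j, 0 ≤ B s i j) (hu : ∀ s, u (s + 1) = u s ᵥ* B s)
    (hq : ∀ s, q (s + 1) = q s ᵥ* B s) (hqpos : ∀ᶠ s in atTop, ∀ j, 0 < q s j)
    (huv : ∀ s, u s ⬝ᵥ v s = 0) (hd₀ : 0 < d) (hd₁ : d ≤ 1)
    (hvB : ∀ s i j, a * v s i ≤ blockProd B s N i j)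
    (hBv : ∀ s i j, d * blockProd B s N i j ≤ a * v s i) (j : ι) :
    Tendsto (fun s => u s j / q s j) atTop (nhds 0) := by
  obtain ⟨s₀, hs₀⟩ := eventually_atTop.1 hqpos
  obtain ⟨K, hK⟩ := Finite.bddAbove_range fun j => |u s₀ j| / q s₀ j
  have hstart (j : ι) : |u s₀ j| ≤ K * q s₀ j :=
    (div_le_iff₀ (hs₀ s₀ le_rfl j)).1 (hK ⟨j, rfl⟩)
  have hlim : Tendsto (fun r : ℕ => K * (1 - d) ^ r) atTop (nhds 0) := by
    simpa using (tendsto_pow_atTop_nhds_zero_of_lt_one (sub_nonneg.2 hd₁)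
      (sub_lt_self 1 hd₀)).const_mul K
  rw [Metric.tendsto_atTop]
  intro ε hε
  obtain ⟨r, hr⟩ := (hlim.eventually_lt_const hε).exists
  refine ⟨s₀ + r * N, fun s hs => ?_⟩
  obtain ⟨t, rfl⟩ := Nat.exists_eq_add_of_le hs
  have hpos : 0 < q (s₀ + r * N + t) j := hs₀ _ (by omega) j
  rw [dist_zero_right, Real.norm_eq_abs, abs_div, abs_of_pos hpos]
  refine ((div_le_iff₀ hpos).2 ?_).trans_lt hr
  exact abs_add_le_of_abs_le hB hu hq
    (abs_le_mul_pow_of_blockProd_comparable hu hq huv hvB hBv hstart r) t j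

end RowSequence

section WeakErgodicity

variable {ι : Type*} [Fintype ι] [DecidableEq ι] {A C : Matrix ι ι ℝ}
  {B : ℕ → Matrix ι ι ℝ} {v : ℕ → ι → ℝ} {b c : ℝ}

theorem pow_apply_le_blockProd_apply (hA : ∀ i j, 0 ≤ A i j)
    (hAB : ∀ s i j, A i j ≤ B s i j) (s t : ℕ) (i j : ι) :
    (A ^ t) i j ≤ blockProd B s t i j := by
  rw [← blockProd_const A s t]
  exact blockProd_apply_mono (fun _ => hA) hAB s t i j

theorem blockProd_apply_le_pow_apply (hB : ∀ s i j, 0 ≤ B s i j)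
    (hBC : ∀ s i j, B s i j ≤ C i j) (s t : ℕ) (i j : ι) :
    blockProd B s t i j ≤ (C ^ t) i j := by
  rw [← blockProd_const C s t]
  exact blockProd_apply_mono hB (fun _ => hBC _) s t i j

theorem exists_blockProd_apply_bounds [Nonempty ι] (hA : ∀ i j, 0 ≤ A i j)
    (hAB : ∀ s i j, A i j ≤ B s i j) (hBC : ∀ s i j, B s i j ≤ C i j) {N : ℕ}
    (hN : ∀ i j, 0 < (A ^ N) i j) :
    ∃ ε D : ℝ, 0 < ε ∧ ∀ s i j, ε ≤ blockProd B s N i j ∧ blockProd B s N i j ≤ D := by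
  obtain ⟨p, hp⟩ := Finite.exists_min fun p : ι × ι => (A ^ N) p.1 p.2
  obtain ⟨D, hD⟩ := Finite.bddAbove_range fun p : ι × ι => (C ^ N) p.1 p.2
  refine ⟨(A ^ N) p.1 p.2, D, hN _ _, fun s i j => ⟨?_, ?_⟩⟩
  · exact (hp (i, j)).trans (pow_apply_le_blockProd_apply hA hAB s N i j)
  · exact (blockProd_apply_le_pow_apply (fun s i j => (hA i j).trans (hAB s i j)) hBC s N i j).trans
      (hD ⟨(i, j), rfl⟩)

theorem exists_blockProd_comparable [Nonempty ι] (hA : ∀ i j, 0 ≤ A i j)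
    (hAB : ∀ s i j, A i j ≤ B s i j) (hBC : ∀ s i j, B s i j ≤ C i j) {N : ℕ}
    (hN : ∀ i j, 0 < (A ^ N) i j) (hc : 0 < c) (hcv : ∀ s i, c ≤ v s i)
    (hvb : ∀ s i, v s i ≤ b) :
    ∃ a d : ℝ, 0 < d ∧ d ≤ 1 ∧ (∀ s i j, a * v s i ≤ blockProd B s N i j) ∧
      ∀ s i j, d * blockProd B s N i j ≤ a * v s i := by
  obtain ⟨ε, D, hε, hεD⟩ := exists_blockProd_apply_bounds hA hAB hBC hN
  obtain ⟨i₀⟩ := ‹Nonempty ι›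
  have hcb : c ≤ b := (hcv 0 i₀).trans (hvb 0 i₀)
  have hεD' : ε ≤ D := (hεD 0 i₀ i₀).1.trans (hεD 0 i₀ i₀).2
  have hb : 0 < b := hc.trans_le hcb
  have hD : 0 < D := hε.trans_le hεD'
  refine ⟨ε / b, ε / D * (c / b), by positivity, ?_, fun s i j => ?_, fun s i j => ?_⟩
  · exact mul_le_one₀ ((div_le_one hD).2 hεD') (by positivity) ((div_le_one hb).2 hcb)
  · calc ε / b * v s i ≤ ε / b * b := by gcongr; exact hvb s i
      _ = ε := div_mul_cancel₀ ε hb.ne'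
      _ ≤ blockProd B s N i j := (hεD s i j).1
  · calc ε / D * (c / b) * blockProd B s N i j ≤ ε / D * (c / b) * D := by
          gcongr; exact (hεD s i j).2
      _ = ε / b * c := by field_simp
      _ ≤ ε / b * v s i := by gcongr; exact hcv s i

theorem tendsto_blockProd_apply_div (hA : ∀ i j, 0 ≤ A i j)
    (hApow : ∀ᶠ L in atTop, ∀ i j, 0 < (A ^ L) i j) (hAB : ∀ s i j, A i j ≤ B s i j)
    (hBC : ∀ s i j, B s i j ≤ C i j) (hc : 0 < c) (hcv : ∀ s i, c ≤ v s i)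
    (hvb : ∀ s i, v s i ≤ b) (hv : ∀ s, ∃ μ : ℝ, B s *ᵥ v (s + 1) = μ • v s) (i i₀ j : ι) :
    Tendsto (fun s => blockProd B 0 s i j / blockProd B 0 s i₀ j) atTop
      (nhds (v 0 i / v 0 i₀)) := by
  have : Nonempty ι := ⟨i⟩
  obtain ⟨N, hN⟩ := hApow.exists
  obtain ⟨a, d, hd₀, hd₁, hvB, hBv⟩ := exists_blockProd_comparable hA hAB hBC hN hc hcv hvb
  let ρ := v 0 i / v 0 i₀
  let q : ℕ → ι → ℝ := fun s => blockProd B 0 s i₀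
  let u : ℕ → ι → ℝ := fun s => blockProd B 0 s i - ρ • q s
  have hrow (k : ι) (s : ℕ) : blockProd B 0 (s + 1) k = blockProd B 0 s k ᵥ* B s := by
    rw [blockProd_succ, zero_add, mul_apply_eq_vecMul]
  have hu (s : ℕ) : u (s + 1) = u s ᵥ* B s := by
    simp only [u, q, hrow, sub_vecMul, smul_vecMul]
  have hu₀ : u 0 ⬝ᵥ v 0 = 0 := by
    have hv₀ : v 0 i₀ ≠ 0 := (hc.trans_le (hcv 0 i₀)).ne'
    simp [u, q, ρ, dotProduct, one_apply, sub_mul, Finset.sum_sub_distrib, hv₀]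
  have hqpos : ∀ᶠ s in atTop, ∀ j, 0 < q s j := hApow.mono fun s hs j =>
    (hs i₀ j).trans_le (pow_apply_le_blockProd_apply hA hAB 0 s i₀ j)
  have hlim := tendsto_div_zero_of_blockProd_comparable
    (fun s i j => (hA i j).trans (hAB s i j)) hu (hrow i₀) hqpos
    (dotProduct_eq_zero_of_zero hu hv hu₀) hd₀ hd₁ hvB hBv j
  rw [← zero_add (v 0 i / v 0 i₀)]
  refine (hlim.add_const ρ).congr' (hqpos.mono fun s hs => ?_)
  have hqj : q s j ≠ 0 := (hs j).ne'
  simp only [u, Pi.sub_apply, Pi.smul_apply, smul_eq_mul, sub_div, mul_div_cancel_right₀ ρ hqj,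
    sub_add_cancel, q]

end WeakErgodicity

section SelmerMatrix

variable {n : ℕ} {k l : ℤ}

theorem selmerBeta_apply_nonneg (hk : 0 ≤ k) (i j : Fin (n + 1)) :
    0 ≤ selmerBeta n k i j := by
  have : (0 : ℝ) ≤ k := mod_cast hk
  simp only [selmerBeta, of_apply]
  split_ifs <;> simp [this]

theorem selmerBeta_apply_mono (hkl : k ≤ l) (i j : Fin (n + 1)) :
    selmerBeta n k i j ≤ selmerBeta n l i j := by
  have : (k : ℝ) ≤ l := mod_cast hkl
  simp only [selmerBeta, of_apply]
  split_ifs <;> simp [this]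

theorem selmerBeta_succ_apply (i : Fin n) (j : Fin (n + 1)) :
    selmerBeta n k i.succ j = if j = i.castSucc then 1 else 0 := by
  simp only [selmerBeta, of_apply, Fin.ext_iff, Fin.val_succ, Fin.val_castSucc,
    Nat.succ_ne_zero, false_and, if_false, Nat.add_right_cancel_iff]

theorem selmerBeta_zero_apply (hn : 0 < n) (j : Fin (n + 1)) :
    selmerBeta n k 0 j =
      (if j = ⟨n - 1, by omega⟩ then (k : ℝ) else 0) + if j = Fin.last n then 1 else 0 := by
  simp only [selmerBeta, of_apply, Fin.ext_iff, Fin.val_last, Fin.val_zero]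
  split_ifs <;> first | omega | simp_all

theorem selmerBeta_mulVec_succ (w : Fin (n + 1) → ℝ) (i : Fin n) :
    (selmerBeta n k *ᵥ w) i.succ = w i.castSucc := by
  simp [mulVec, dotProduct, selmerBeta_succ_apply]

theorem selmerBeta_mulVec_zero (hn : 0 < n) (w : Fin (n + 1) → ℝ) :
    (selmerBeta n k *ᵥ w) 0 = k * w ⟨n - 1, by omega⟩ + w (Fin.last n) := by
  simp [mulVec, dotProduct, selmerBeta_zero_apply hn, add_mul, Finset.sum_add_distrib]

theorem selmerBeta_pow_apply_pos_of_eq_add (hk : 0 ≤ k) {d : ℕ} {i j : Fin (n + 1)}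
    (h : (i : ℕ) = j + d) : 0 < (selmerBeta n k ^ d) i j := by
  induction d generalizing i with
  | zero => simp [Fin.ext h]
  | succ d ih =>
    obtain ⟨i, rfl⟩ := Fin.exists_succ_eq.2 (show i ≠ 0 by rintro rfl; simp at h)
    have hstep : 0 < (selmerBeta n k ^ 1) i.succ i.castSucc := by
      simp [selmerBeta_succ_apply]
    have hrest : 0 < (selmerBeta n k ^ d) i.castSucc j :=
      ih (by simpa [← add_assoc] using h)
    simpa only [add_comm] using pow_add_apply_pos (selmerBeta_apply_nonneg hk) hstep hrest

theorem selmerBeta_pow_zero_apply_pos (hn : 0 < n) (hk : 0 ≤ k) (j : Fin (n + 1)) :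
    0 < (selmerBeta n k ^ (1 + (n - j))) 0 j := by
  have hlast : 0 < (selmerBeta n k ^ 1) 0 (Fin.last n) := by
    have : (0 : ℝ) ≤ k := mod_cast hk
    rw [pow_one, selmerBeta_zero_apply hn, if_pos rfl]
    positivity
  refine pow_add_apply_pos (selmerBeta_apply_nonneg hk) hlast
    (selmerBeta_pow_apply_pos_of_eq_add hk ?_)
  rw [Fin.val_last]
  omega

theorem selmerBeta_pow_self_zero_zero_pos (hn : 0 < n) (hk : 0 < k) :
    0 < (selmerBeta n k ^ n) 0 0 := by
  have hpred : 0 < (selmerBeta n k ^ 1) 0 ⟨n - 1, by omega⟩ := by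
    have : (0 : ℝ) < k := mod_cast hk
    rw [pow_one, selmerBeta_zero_apply hn, if_pos rfl]
    positivity
  have hdown : 0 < (selmerBeta n k ^ (n - 1)) ⟨n - 1, by omega⟩ 0 :=
    selmerBeta_pow_apply_pos_of_eq_add hk.le (by simp)
  simpa [Nat.add_sub_cancel' hn] using
    pow_add_apply_pos (selmerBeta_apply_nonneg hk.le) hpred hdown

theorem isIrreducible_selmerBeta (hn : 0 < n) (hk : 0 ≤ k) :
    (selmerBeta n k).IsIrreducible := by
  have hnonneg := selmerBeta_apply_nonneg (n := n) hk
  refine (isIrreducible_iff_exists_pow_pos hnonneg).2 fun i j => ⟨i + (1 + (n - j)), by omega, ?_⟩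
  exact pow_add_apply_pos hnonneg (selmerBeta_pow_apply_pos_of_eq_add hk (by simp))
    (selmerBeta_pow_zero_apply_pos hn hk j)

theorem eventually_selmerBeta_pow_apply_pos (hn : 0 < n) (hk : 0 < k) :
    ∀ᶠ L in atTop, ∀ i j, 0 < (selmerBeta n k ^ L) i j := by
  refine eventually_forall_pow_apply_pos (isIrreducible_selmerBeta hn hk.le)
    (a := 1 + n) (b := n) ?_ ?_ (selmerBeta_pow_self_zero_zero_pos hn hk)
  · simp
  · simpa using selmerBeta_pow_zero_apply_pos hn hk.le 0

end SelmerMatrix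

section SelmerMap

variable {n : ℕ} {x : Fin n → ℝ}

theorem ent_of_lt (x : Fin n → ℝ) {m : ℕ} (hm : m < n) : ent x m = x ⟨m, hm⟩ :=
  dif_pos hm

theorem ent_le_one_of_mem_Bset (hx : x ∈ Bset n) (m : ℕ) : ent x m ≤ 1 :=
  (hx.2 0 m m.zero_le).trans hx.1

theorem ent_zero_pos (hx : x ∈ Bset n) (hpos : 0 < ent x (n - 1)) : 0 < ent x 0 :=
  hpos.trans_le (hx.2 0 _ (Nat.zero_le _))

theorem msaDigit_mul_ent_le_one (hpos : 0 < ent x (n - 1)) :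
    (msaDigit x : ℝ) * ent x (n - 1) ≤ 1 :=
  (mul_le_mul_of_nonneg_right (Int.floor_le _) hpos.le).trans_eq (inv_mul_cancel₀ hpos.ne')

theorem one_lt_msaDigit_add_one_mul_ent (hpos : 0 < ent x (n - 1)) :
    1 < ((msaDigit x : ℝ) + 1) * ent x (n - 1) :=
  (inv_lt_iff_one_lt_mul₀ hpos).1 (Int.lt_floor_add_one _)

theorem one_le_msaDigit (hx : x ∈ Bset n) (hpos : 0 < ent x (n - 1)) : 1 ≤ msaDigit x := by
  rw [msaDigit, Int.le_floor, Int.cast_one]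
  exact (one_le_inv₀ hpos).2 (ent_le_one_of_mem_Bset hx _)

theorem ent_msaS (x : Fin n → ℝ) (m : ℕ) :
    ent (msaS x) m =
      if m + 1 < n then ent x (m + 1) / ent x 0
      else if m + 1 = n then (1 - (msaDigit x : ℝ) * ent x (n - 1)) / ent x 0 else 0 := by
  by_cases hm : m < n
  · simp only [ent_of_lt _ hm, msaS]
    split_ifs <;> first | omega | rfl
  · rw [if_neg (by omega), if_neg (by omega), ent, dif_neg hm]

theorem msaS_mem_Bset (hx : x ∈ Bset n) (hpos : 0 < ent x (n - 1)) : msaS x ∈ Bset n := by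
  have hfirst : 0 < ent x 0 := ent_zero_pos hx hpos
  have hrem_nonneg := sub_nonneg.2 (msaDigit_mul_ent_le_one hpos)
  have hrem_le : 1 - (msaDigit x : ℝ) * ent x (n - 1) ≤ ent x (n - 1) := by
    linarith [one_lt_msaDigit_add_one_mul_ent hpos]
  have hanti : Antitone (ent (msaS x)) := by
    refine antitone_nat_of_succ_le fun m => ?_
    obtain hm | hm | hm : m + 2 < n ∨ m + 2 = n ∨ n ≤ m + 1 := by omega
    · simp only [ent_msaS, show m + 1 < n by omega, hm, if_true]
      exact div_le_div_of_nonneg_right (hx.2 _ _ (by omega)) hfirst.le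
    · subst hm
      simpa [ent_msaS] using div_le_div_of_nonneg_right hrem_le hfirst.le
    · rw [ent_msaS, if_neg (by omega), if_neg (by omega), ent_msaS]
      split_ifs <;> first | omega | positivity
  refine ⟨?_, fun i j hij => hanti hij⟩
  rw [ent_msaS]
  split_ifs
  · exact (div_le_one hfirst).2 (hx.2 _ _ (by omega))
  · exact (div_le_one hfirst).2 (hrem_le.trans (hx.2 _ _ (by omega)))
  · exact zero_le_one

theorem iterate_msaS_mem_Bset (hx : x ∈ Bset n)
    (horb : ∀ s : ℕ, 0 < ent (msaS^[s] x) (n - 1)) (s : ℕ) : msaS^[s] x ∈ Bset n := by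
  induction s with
  | zero => exact hx
  | succ s ih =>
    rw [Function.iterate_succ_apply']
    exact msaS_mem_Bset ih (horb s)

/-- The vector `(1, x₁, …, x_n)` of homogeneous coordinates of `x`, on which the projective map
`msaS` acts linearly through the Selmer matrices. -/
def homogeneousCoords (x : Fin n → ℝ) : Fin (n + 1) → ℝ :=
  Fin.cons 1 x

theorem homogeneousCoords_apply (x : Fin n → ℝ) (j : Fin (n + 1)) :
    homogeneousCoords x j = if (j : ℕ) = 0 then 1 else ent x (j - 1) := by
  cases j using Fin.cases <;> simp [homogeneousCoords, ent]

theorem homogeneousCoords_le_one (hx : x ∈ Bset n) (j : Fin (n + 1)) :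
    homogeneousCoords x j ≤ 1 := by
  rw [homogeneousCoords_apply]
  split_ifs
  · rfl
  · exact ent_le_one_of_mem_Bset hx _

theorem ent_le_homogeneousCoords (hx : x ∈ Bset n) (j : Fin (n + 1)) :
    ent x (n - 1) ≤ homogeneousCoords x j := by
  rw [homogeneousCoords_apply]
  split_ifs
  · exact ent_le_one_of_mem_Bset hx _
  · exact hx.2 _ _ (by omega)

theorem homogeneousCoords_msaS_castSucc (hfirst : ent x 0 ≠ 0) (i : Fin n) :
    homogeneousCoords (msaS x) i.castSucc = x i / ent x 0 := by
  obtain ⟨m, hm⟩ := i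
  rw [← ent_of_lt x hm, homogeneousCoords_apply]
  cases m with
  | zero => simp [hfirst]
  | succ m => simp [ent_msaS, hm]

theorem homogeneousCoords_msaS_last (hn : 0 < n) :
    homogeneousCoords (msaS x) (Fin.last n) =
      (1 - (msaDigit x : ℝ) * ent x (n - 1)) / ent x 0 := by
  rw [homogeneousCoords_apply, Fin.val_last, if_neg hn.ne', ent_msaS, if_neg (by omega),
    if_pos (by omega)]

theorem selmerBeta_mulVec_homogeneousCoords_msaS (hn : 0 < n) (hfirst : ent x 0 ≠ 0) :
    selmerBeta n (msaDigit x) *ᵥ homogeneousCoords (msaS x) =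
      (ent x 0)⁻¹ • homogeneousCoords x := by
  ext i
  cases i using Fin.cases with
  | zero =>
    have hpred := homogeneousCoords_msaS_castSucc hfirst ⟨n - 1, by omega⟩
    rw [← ent_of_lt x, Fin.castSucc_mk] at hpred
    rw [selmerBeta_mulVec_zero hn, hpred, homogeneousCoords_msaS_last hn, Pi.smul_apply,
      homogeneousCoords, Fin.cons_zero, smul_eq_mul]
    ring
  | succ i =>
    rw [selmerBeta_mulVec_succ, homogeneousCoords_msaS_castSucc hfirst, Pi.smul_apply,
      homogeneousCoords, Fin.cons_succ, smul_eq_mul, div_eq_inv_mul]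

end SelmerMap

theorem msaBeta_eq_blockProd (n : ℕ) (x : Fin n → ℝ) (s : ℕ) :
    msaBeta n x s = blockProd (fun t => selmerBeta n (msaDigit (msaS^[t] x))) 0 s := by
  simp only [msaBeta, blockProd, zero_add]

theorem msa_periodic_uniform_weak_convergence_general {n : ℕ} {x : Fin n → ℝ} (hx : x ∈ Bset n)
    (horb : ∀ s : ℕ, 0 < ent (msaS^[s] x) (n - 1))
    (hdigit : BddAbove (Set.range fun s => msaDigit (msaS^[s] x)))
    (g : Fin (n + 1)) (i : Fin n) :
    Tendsto (fun s : ℕ => (msaBeta n x s) i.succ g / (msaBeta n x s) 0 g)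
      atTop (nhds (x i)) := by
  obtain ⟨D, hD⟩ := hdigit
  have hmem := iterate_msaS_mem_Bset hx horb
  have hdigit_le (s : ℕ) : msaDigit (msaS^[s] x) ≤ D := hD ⟨s, rfl⟩
  have hdigit_ge (s : ℕ) : 1 ≤ msaDigit (msaS^[s] x) := one_le_msaDigit (hmem s) (horb s)
  have hD₀ : (0 : ℝ) < D + 1 := by
    exact_mod_cast Int.add_pos (zero_lt_one.trans_le ((hdigit_ge 0).trans (hdigit_le 0))) one_pos
  have hlast (s : ℕ) : ((D : ℝ) + 1)⁻¹ ≤ ent (msaS^[s] x) (n - 1) := by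
    rw [inv_le_iff_one_le_mul₀' hD₀]
    refine (one_lt_msaDigit_add_one_mul_ent (horb s)).le.trans ?_
    gcongr
    exacts [(horb s).le, hdigit_le s]
  have hstep (s : ℕ) : ∃ μ : ℝ, selmerBeta n (msaDigit (msaS^[s] x)) *ᵥ
      homogeneousCoords (msaS^[s + 1] x) = μ • homogeneousCoords (msaS^[s] x) := by
    rw [Function.iterate_succ_apply']
    exact ⟨_, selmerBeta_mulVec_homogeneousCoords_msaS i.pos (ent_zero_pos (hmem s) (horb s)).ne'⟩
  simpa only [msaBeta_eq_blockProd, homogeneousCoords, Function.iterate_zero_apply, Fin.cons_succ,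
    Fin.cons_zero, div_one] using
    tendsto_blockProd_apply_div (selmerBeta_apply_nonneg zero_le_one)
      (eventually_selmerBeta_pow_apply_pos i.pos one_pos)
      (fun s => selmerBeta_apply_mono (hdigit_ge s)) (fun s => selmerBeta_apply_mono (hdigit_le s))
      (inv_pos.2 hD₀) (fun s j => (hlast s).trans (ent_le_homogeneousCoords (hmem s) j))
      (fun s => homogeneousCoords_le_one (hmem s)) hstep i.succ 0 g

/-- **Uniform weak convergence of the periodic MSA.** Let `x ∈ B^n` have MSA orbit
defined for all times and suppose its MSA expansion is eventually periodic:
`S^{m+p} x = S^m x` for some `m ≥ 0`, `p ≥ 1`. Then for every column index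
`g ∈ {0,…,n}` and every `i ∈ {1,…,n}`,
`(β^{(s)})_{i,g} / (β^{(s)})_{0,g} → x_i` as `s → ∞`. -/
theorem msa_periodic_uniform_weak_convergence (n : ℕ) (hn : 1 ≤ n) (x : Fin n → ℝ)
    (hx : x ∈ Bset n) (horb : ∀ s : ℕ, 0 < ent (msaS^[s] x) (n - 1))
    (m p : ℕ) (hp : 1 ≤ p) (hper : msaS^[m + p] x = msaS^[m] x) :
    ∀ g : Fin (n + 1), ∀ i : Fin n,
      Tendsto
        (fun s : ℕ => (msaBeta n x s) i.succ g / (msaBeta n x s) 0 g)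
        atTop (nhds (x i)) := by
  have hdigits : (Set.range fun s => msaDigit (msaS^[s] x)).Finite := by
    simpa only [← Set.range_comp, Function.comp_def] using
      (finite_range_iterate_of_iterate_add_eq hp hper).image msaDigit
  exact msa_periodic_uniform_weak_convergence_general hx horb hdigits.bddAbove
end
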